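/- Let α ∈ (0,1/24). There exists δ ∈ (0,1), depending only on α, with the following property: for every x = (x1,x2) in the closure of D⁺ with x1 ≤ x2 ≤ δ and every measurable ω : ℝ×(0,∞) → ℝ which is odd in x1 and satisfies χ_{A(x)} ≤ ω ≤ 1 on D⁺, one has u2(x) := ∫_{D⁺} K2(x,y) ω(y) dy ≥ (1/(50α))·x2^{1−2α}. -/

import Mathlib

/-!
The kernel `K2 α x` is the field of a source at `x` and its opposite mirror image across the
horizontal axis, plus the same field reflected in the vertical axis. On `D⁺` the reflected part is
nonnegative, and the direct part is negative only for `y₁ < x₁`. Along a vertical line at distance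
`t` from the source, the integral of the absolute value of the direct part reduces to an integral of
`t |(t, h)| ^ (-2 - 2α)` over `|h| ≤ x₂`, which is at most `π t ^ (-2α)`. The strip `0 < y₁ < x₁`
therefore costs at most `π x₁ ^ (1 - 2α) / (1 - 2α)`, with no factor `1 / α`.

The gain comes from the triangle, where `ω = 1`. Telescoping turns its vertical section at distance
`t` into an integral over heights `[0, 2x₂]` minus one over `[t, t + 2x₂]`. For `t ≥ 4x₂` the
former heights are at most `t / 2` and the latter at least `t`, so the section contributes at least
`2 ((5/4) ^ (-1 - α) - 2 ^ (-1 - α)) x₂ t ^ (-1 - 2α)`. Integrating over `4x₂ < t < 1` produces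
`x₂ ^ (1 - 2α) / α` up to a constant, which beats the loss when `α` is small; the cut-off at `t = 1`
is harmless once `x₂ ^ (2α) ≤ 1 / 100`.
-/

open MeasureTheory

noncomputable section

/-- Euclidean distance between points of `ℝ²` written as pairs. -/
def edist2 (p q : ℝ × ℝ) : ℝ := Real.sqrt ((p.1 - q.1) ^ 2 + (p.2 - q.2) ^ 2)

/-- The open quadrant `D⁺ = (0,∞) × (0,∞)`. -/
def Dplus : Set (ℝ × ℝ) := Set.Ioi 0 ×ˢ Set.Ioi 0

/-- `K1(x,y) = (y₂-x₂)/|x-y|^{2+2α} - (y₂-x₂)/|x-ỹ|^{2+2α}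
  - (y₂+x₂)/|x+y|^{2+2α} + (y₂+x₂)/|x-ȳ|^{2+2α}`, where `ỹ = (-y₁,y₂)`, `ȳ = (y₁,-y₂)`. -/
def K1 (α : ℝ) (x y : ℝ × ℝ) : ℝ :=
  (y.2 - x.2) / edist2 x y ^ (2 + 2 * α)
  - (y.2 - x.2) / edist2 x (-y.1, y.2) ^ (2 + 2 * α)
  - (y.2 + x.2) / edist2 x (-y.1, -y.2) ^ (2 + 2 * α)
  + (y.2 + x.2) / edist2 x (y.1, -y.2) ^ (2 + 2 * α)

/-- `K2(x,y) = (y₁-x₁)/|x-y|^{2+2α} + (y₁+x₁)/|x-ỹ|^{2+2α}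
  - (y₁+x₁)/|x+y|^{2+2α} - (y₁-x₁)/|x-ȳ|^{2+2α}`, where `ỹ = (-y₁,y₂)`, `ȳ = (y₁,-y₂)`. -/
def K2 (α : ℝ) (x y : ℝ × ℝ) : ℝ :=
  (y.1 - x.1) / edist2 x y ^ (2 + 2 * α)
  + (y.1 + x.1) / edist2 x (-y.1, y.2) ^ (2 + 2 * α)
  - (y.1 + x.1) / edist2 x (-y.1, -y.2) ^ (2 + 2 * α)
  - (y.1 - x.1) / edist2 x (y.1, -y.2) ^ (2 + 2 * α)

/-- The triangle `A(x) = {y : x₁ < y₁ < x₁+1, x₂ < y₂ < x₂ + (y₁ - x₁)}`. -/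
def Atri (x : ℝ × ℝ) : Set (ℝ × ℝ) :=
  {y : ℝ × ℝ | x.1 < y.1 ∧ y.1 < x.1 + 1 ∧ x.2 < y.2 ∧ y.2 < x.2 + (y.1 - x.1)}

open Set

section Integration

variable {X E : Type*}

lemma indicator_regionBetween [Zero E] (f g : X → ℝ) (s : Set X) (F : X × ℝ → E) (x : X) (y : ℝ) :
    (regionBetween f g s).indicator F (x, y) =
      s.indicator (fun x => (Ioo (f x) (g x)).indicator (fun y => F (x, y)) y) x := by
  by_cases hx : x ∈ s <;> simp [regionBetween, indicator, hx]

variable [NormedAddCommGroup E] [NormedSpace ℝ E]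

lemma integral_indicator_regionBetween (f g : X → ℝ) (s : Set X) (F : X × ℝ → E) (x : X) :
    ∫ y, (regionBetween f g s).indicator F (x, y) =
      s.indicator (fun x => ∫ y in Ioo (f x) (g x), F (x, y)) x := by
  simp only [indicator_regionBetween]
  by_cases hx : x ∈ s <;> simp [hx, integral_indicator measurableSet_Ioo]

variable [MeasurableSpace X] {μ : Measure X} {f g : X → ℝ} {s : Set X} {F : X × ℝ → E}

lemma setIntegral_regionBetween [SFinite μ] (hf : Measurable f) (hg : Measurable g)
    (hs : MeasurableSet s) (hF : IntegrableOn F (regionBetween f g s) (μ.prod volume)) :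
    ∫ p in regionBetween f g s, F p ∂μ.prod volume =
      ∫ x in s, (∫ y in Ioo (f x) (g x), F (x, y)) ∂μ := by
  have hmeas := measurableSet_regionBetween hf hg hs
  rw [← integral_indicator hmeas, integral_prod _ (hF.integrable_indicator hmeas),
    ← integral_indicator hs]
  simp only [integral_indicator_regionBetween]

lemma integrableOn_integral_regionBetween [SFinite μ] (hf : Measurable f) (hg : Measurable g)
    (hs : MeasurableSet s) (hF : IntegrableOn F (regionBetween f g s) (μ.prod volume)) :
    IntegrableOn (fun x => ∫ y in Ioo (f x) (g x), F (x, y)) s μ := by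
  have h := (hF.integrable_indicator (measurableSet_regionBetween hf hg hs)).integral_prod_left
  simp only [integral_indicator_regionBetween] at h
  exact (integrable_indicator_iff hs).1 h

end Integration

lemma integrable_comp_abs {E : Type*} [NormedAddCommGroup E] {f : ℝ → E}
    (hf : IntegrableOn f (Ioi 0)) : Integrable fun x => f |x| := by
  have hpos : IntegrableOn (fun x => f |x|) (Ioi 0) :=
    hf.congr_fun (fun x hx => by rw [abs_of_pos hx]) measurableSet_Ioi
  have hneg : IntegrableOn (fun x => f |x|) (Iic 0) := by
    rw [integrableOn_Iic_iff_integrableOn_Iio]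
    simpa [Function.comp_def] using
      ((Measure.measurePreserving_neg volume).integrableOn_comp_preimage
        (MeasurableEquiv.neg ℝ).measurableEmbedding).2 hpos
  rw [← integrableOn_univ, ← Iic_union_Ioi (a := (0 : ℝ))]
  exact hneg.union hpos

lemma integrableOn_Ioi_min_rpow {A B p q : ℝ} (hA : 0 ≤ A) (hB : 0 ≤ B) (hp : -1 < p)
    (hq : q < -1) : IntegrableOn (fun t : ℝ => min (A * t ^ p) (B * t ^ q)) (Ioi 0) := by
  have hm : Measurable fun t : ℝ => min (A * t ^ p) (B * t ^ q) := by fun_prop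
  have hnonneg {t : ℝ} (ht : 0 < t) : 0 ≤ min (A * t ^ p) (B * t ^ q) := by positivity
  have hnear : IntegrableOn (fun t : ℝ => A * t ^ p) (Ioc 0 1) :=
    ((intervalIntegrable_iff_integrableOn_Ioc_of_le zero_le_one).1
      (intervalIntegral.intervalIntegrable_rpow' hp)).const_mul A
  have hfar : IntegrableOn (fun t : ℝ => B * t ^ q) (Ioi 1) :=
    (integrableOn_Ioi_rpow_of_lt hq one_pos).const_mul B
  rw [← Ioc_union_Ioi_eq_Ioi (zero_le_one (α := ℝ)), integrableOn_union]
  constructor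
  · refine hnear.mono' hm.aestronglyMeasurable
      ((ae_restrict_mem measurableSet_Ioc).mono fun t ht => ?_)
    rw [Real.norm_of_nonneg (hnonneg ht.1)]
    exact min_le_left _ _
  · refine hfar.mono' hm.aestronglyMeasurable
      ((ae_restrict_mem measurableSet_Ioi).mono fun t ht => ?_)
    rw [Real.norm_of_nonneg (hnonneg (one_pos.trans ht))]
    exact min_le_right _ _

lemma integrableOn_Ioo_sub_rpow (c : ℝ) {a : ℝ} (ha : 0 < a) (b p : ℝ) :
    IntegrableOn (fun y => (y - c) ^ p) (Ioo (c + a) (c + b)) := by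
  refine (ContinuousOn.integrableOn_Icc fun y hy => ?_).mono_set Ioo_subset_Icc_self
  exact ((continuous_sub_right c).continuousAt.rpow_const
    (Or.inl (by linarith [hy.1]))).continuousWithinAt

lemma setIntegral_Ioo_sub_rpow (c : ℝ) {a b p : ℝ} (ha : 0 < a) (hab : a ≤ b) (hp : p ≠ -1) :
    ∫ y in Ioo (c + a) (c + b), (y - c) ^ p = (b ^ (p + 1) - a ^ (p + 1)) / (p + 1) := by
  rw [← integral_Ioc_eq_integral_Ioo, ← intervalIntegral.integral_of_le (by linarith),
    intervalIntegral.integral_comp_sub_right (fun t => t ^ p), add_sub_cancel_left,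
    add_sub_cancel_left, integral_rpow (Or.inr ⟨hp, notMem_uIcc_of_lt ha (ha.trans_le hab)⟩)]

lemma setIntegral_Ioi_comp_add {E : Type*} [NormedAddCommGroup E] [NormedSpace ℝ E] (f : ℝ → E)
    (a c : ℝ) : ∫ y in Ioi a, f (y + c) = ∫ y in Ioi (a + c), f y := by
  simpa using (measurePreserving_add_right volume c).setIntegral_preimage_emb
    (measurableEmbedding_addRight c) f (Ioi (a + c))

lemma inv_one_add_mul_le_rpow_neg {s p : ℝ} (hs : 0 ≤ s) (hp0 : 0 ≤ p) (hp1 : p ≤ 1) :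
    (1 + p * s)⁻¹ ≤ (1 + s) ^ (-p) := by
  rw [Real.rpow_neg (by positivity)]
  exact inv_anti₀ (by positivity) (rpow_one_add_le_one_add_mul_self (by linarith) hp0 hp1)

lemma abs_mul_abs_rpow {t : ℝ} (ht : t ≠ 0) (p : ℝ) : |t| * |t| ^ (p - 1) = |t| ^ p := by
  rw [Real.rpow_sub_one (abs_ne_zero.2 ht), mul_div_cancel₀ _ (abs_ne_zero.2 ht)]

lemma sq_rpow_eq_abs_rpow (t p : ℝ) : (t ^ 2) ^ p = |t| ^ (2 * p) := by
  rw [← sq_abs, Real.rpow_mul (abs_nonneg t), Real.rpow_two]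

/-- The radial profile `|(t, h)| ^ (-(2 + 2α))` of the kernel, as a function of the horizontal and
vertical displacements `t` and `h`. -/
def radialPow (α t h : ℝ) : ℝ := (t ^ 2 + h ^ 2) ^ (-(1 + α))

section RadialPow

variable {α t : ℝ}

lemma radialPow_le_radialPow {h h' : ℝ} (hα : -1 ≤ α) (ht : t ≠ 0) (hh : h ^ 2 ≤ h' ^ 2) :
    radialPow α t h' ≤ radialPow α t h :=
  Real.rpow_le_rpow_of_nonpos (by positivity) (by linarith) (by linarith)

lemma radialPow_mul (α t r : ℝ) :
    radialPow α t (r * t) = (1 + r ^ 2) ^ (-(1 + α)) * |t| ^ (-2 - 2 * α) := by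
  rw [radialPow, show t ^ 2 + (r * t) ^ 2 = (1 + r ^ 2) * t ^ 2 by ring,
    Real.mul_rpow (by positivity) (by positivity), sq_rpow_eq_abs_rpow]
  ring_nf

lemma radialPow_le_abs_rpow (hα : -1 ≤ α) (ht : t ≠ 0) (h : ℝ) :
    radialPow α t h ≤ |t| ^ (-2 - 2 * α) := by
  calc radialPow α t h ≤ radialPow α t (0 * t) :=
        radialPow_le_radialPow hα ht (by simpa using sq_nonneg h)
    _ = |t| ^ (-2 - 2 * α) := by rw [radialPow_mul]; simp

lemma radialPow_le_abs_rpow_mul_inv (hα : 0 ≤ α) (ht : t ≠ 0) (h : ℝ) :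
    radialPow α t h ≤ |t| ^ (-2 * α) * (t ^ 2 + h ^ 2)⁻¹ := by
  have hsum : 0 < t ^ 2 + h ^ 2 := by positivity
  calc radialPow α t h = (t ^ 2 + h ^ 2) ^ (-α) * (t ^ 2 + h ^ 2)⁻¹ := by
        rw [radialPow, ← Real.rpow_neg_one, ← Real.rpow_add hsum]
        ring_nf
    _ ≤ (t ^ 2) ^ (-α) * (t ^ 2 + h ^ 2)⁻¹ := by
        gcongr ?_ * _
        exact Real.rpow_le_rpow_of_nonpos (by positivity) (by linarith [sq_nonneg h]) (by linarith)
    _ = |t| ^ (-2 * α) * (t ^ 2 + h ^ 2)⁻¹ := by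
        rw [sq_rpow_eq_abs_rpow]
        ring_nf

lemma continuous_radialPow (α : ℝ) (ht : t ≠ 0) : Continuous (radialPow α t) :=
  Continuous.rpow_const (by fun_prop) fun h => Or.inl (by positivity)

lemma intervalIntegrable_radialPow (α : ℝ) (ht : t ≠ 0) (a b : ℝ) :
    IntervalIntegrable (radialPow α t) volume a b :=
  (continuous_radialPow α ht).intervalIntegrable a b

lemma integrable_radialPow (hα : -1 / 2 < α) (ht : t ≠ 0) : Integrable (radialPow α t) := by
  have hscale : radialPow α t =
      fun h => (1 + ‖h / t‖ ^ 2) ^ (-(2 + 2 * α) / 2) * |t| ^ (-2 - 2 * α) := by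
    ext h
    rw [← div_mul_cancel₀ h ht, radialPow_mul, div_mul_cancel₀ h ht, Real.norm_eq_abs, sq_abs]
    ring_nf
  have hbase : Integrable fun h : ℝ => (1 + ‖h‖ ^ 2) ^ (-(2 + 2 * α) / 2) :=
    integrable_rpow_neg_one_add_norm_sq (by rw [Module.finrank_self, Nat.cast_one]; linarith)
  rw [hscale]
  exact (hbase.comp_div ht).mul_const _

lemma setIntegral_Ioi_radialPow_sub (hα : -1 / 2 < α) (ht : t ≠ 0) {s : ℝ} (hs : 0 ≤ s) :
    ∫ y in Ioi 0, (radialPow α t (y - s) - radialPow α t (y + s)) =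
      ∫ h in -s..s, radialPow α t h := by
  have hint := integrable_radialPow hα ht
  rw [integral_sub (hint.comp_sub_right s).integrableOn (hint.comp_add_right s).integrableOn]
  simp only [sub_eq_add_neg _ s]
  rw [setIntegral_Ioi_comp_add, setIntegral_Ioi_comp_add, zero_add, zero_add]
  exact intervalIntegral.integral_Ioi_sub_Ioi hint.integrableOn (by linarith)

lemma integral_radialPow_le_pi (hα : 0 ≤ α) (ht : t ≠ 0) {s : ℝ} (hs : 0 ≤ s) :
    |t| * ∫ h in -s..s, radialPow α t h ≤ Real.pi * |t| ^ (-2 * α) := by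
  have harctan : ∫ h in -s..s, (t ^ 2 + h ^ 2)⁻¹ ≤ Real.pi / |t| := by
    rw [← sq_abs t, integral_inv_sq_add_sq (abs_ne_zero.2 ht), div_eq_inv_mul Real.pi]
    refine mul_le_mul_of_nonneg_left ?_ (by positivity)
    linarith [Real.arctan_lt_pi_div_two (s / |t|), Real.neg_pi_div_two_lt_arctan (-s / |t|)]
  have hinv : Continuous fun h : ℝ => |t| ^ (-2 * α) * (t ^ 2 + h ^ 2)⁻¹ :=
    continuous_const.mul (Continuous.inv₀ (by fun_prop) fun h => by positivity)
  calc |t| * ∫ h in -s..s, radialPow α t h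
      ≤ |t| * ∫ h in -s..s, |t| ^ (-2 * α) * (t ^ 2 + h ^ 2)⁻¹ := by
        gcongr
        exact intervalIntegral.integral_mono_on (by linarith)
          (intervalIntegrable_radialPow α ht _ _) (hinv.intervalIntegrable _ _)
          fun h _ => radialPow_le_abs_rpow_mul_inv hα ht h
    _ ≤ |t| * (|t| ^ (-2 * α) * (Real.pi / |t|)) := by
        rw [intervalIntegral.integral_const_mul]
        gcongr
    _ = Real.pi * |t| ^ (-2 * α) := by
        field_simp

lemma integral_radialPow_le_rpow (hα : -1 ≤ α) (ht : t ≠ 0) {s : ℝ} (hs : 0 ≤ s) :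
    |t| * ∫ h in -s..s, radialPow α t h ≤ 2 * s * |t| ^ (-1 - 2 * α) := by
  calc |t| * ∫ h in -s..s, radialPow α t h
      ≤ |t| * ∫ _ in -s..s, |t| ^ (-2 - 2 * α) := by
        gcongr
        exact intervalIntegral.integral_mono_on (by linarith)
          (intervalIntegrable_radialPow α ht _ _) intervalIntegrable_const
          fun h _ => radialPow_le_abs_rpow hα ht h
    _ = 2 * s * (|t| * |t| ^ (-1 - 2 * α - 1)) := by
        rw [intervalIntegral.integral_const, smul_eq_mul]
        ring_nf
    _ = 2 * s * |t| ^ (-1 - 2 * α) := by rw [abs_mul_abs_rpow ht]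

lemma le_integral_radialPow_sub {r s : ℝ} (hα : -1 ≤ α) (ht : 0 < t) (hs : 0 ≤ s)
    (hr : 2 * s ≤ r * t) :
    2 * s * (((1 + r ^ 2) ^ (-(1 + α)) - 2 ^ (-(1 + α))) * t ^ (-1 - 2 * α)) ≤
      t * ((∫ h in (0)..(2 * s), radialPow α t h) - ∫ h in t..(t + 2 * s), radialPow α t h) := by
  have hnear : ∫ _ in (0)..(2 * s), radialPow α t (r * t) ≤
      ∫ h in (0)..(2 * s), radialPow α t h :=
    intervalIntegral.integral_mono_on (by linarith) intervalIntegrable_const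
      (intervalIntegrable_radialPow α ht.ne' _ _) fun h hh =>
        radialPow_le_radialPow hα ht.ne' (pow_le_pow_left₀ hh.1 (hh.2.trans hr) 2)
  have hfar : ∫ h in t..(t + 2 * s), radialPow α t h ≤
      ∫ _ in t..(t + 2 * s), radialPow α t (1 * t) :=
    intervalIntegral.integral_mono_on (by linarith) (intervalIntegrable_radialPow α ht.ne' _ _)
      intervalIntegrable_const fun h hh =>
        radialPow_le_radialPow hα ht.ne' (pow_le_pow_left₀ (by linarith) (by linarith [hh.1]) 2)
  calc 2 * s * (((1 + r ^ 2) ^ (-(1 + α)) - 2 ^ (-(1 + α))) * t ^ (-1 - 2 * α))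
      = t * ((∫ _ in (0)..(2 * s), radialPow α t (r * t)) -
          ∫ _ in t..(t + 2 * s), radialPow α t (1 * t)) := by
        simp only [intervalIntegral.integral_const, radialPow_mul, smul_eq_mul]
        rw [← abs_of_pos ht, ← abs_mul_abs_rpow ht.ne' (-1 - 2 * α), abs_abs]
        ring_nf
    _ ≤ _ := by gcongr

end RadialPow

/-- The horizontal kernel at `y` of a unit source at `(c, s)` together with the opposite source at
its mirror image `(c, -s)`. The kernel `K2 α x` is the sum of those of `x` and of its reflection
in the vertical axis. -/
def mirrorKernel (α c s : ℝ) (y : ℝ × ℝ) : ℝ :=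
  (y.1 - c) * (radialPow α (y.1 - c) (y.2 - s) - radialPow α (y.1 - c) (y.2 + s))

lemma edist2_rpow (α : ℝ) (p q : ℝ × ℝ) :
    edist2 p q ^ (2 + 2 * α) = ((p.1 - q.1) ^ 2 + (p.2 - q.2) ^ 2) ^ (1 + α) := by
  rw [edist2, Real.sqrt_eq_rpow, ← Real.rpow_mul (by positivity)]
  ring_nf

lemma K2_eq_mirrorKernel_add (α : ℝ) (x y : ℝ × ℝ) :
    K2 α x y = mirrorKernel α x.1 x.2 y + mirrorKernel α (-x.1) x.2 y := by
  have hdiv (a p q : ℝ) : a / (p ^ 2 + q ^ 2) ^ (1 + α) = a * radialPow α p q := by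
    rw [radialPow, Real.rpow_neg (by positivity), div_eq_mul_inv]
  simp only [K2, edist2_rpow, mirrorKernel, hdiv, radialPow]
  ring_nf

section MirrorKernel

variable {α c s : ℝ}

lemma mirrorKernel_nonneg {y : ℝ × ℝ} (hα : -1 ≤ α) (hs : 0 ≤ s) (hc : c ≤ y.1) (hy : 0 ≤ y.2) :
    0 ≤ mirrorKernel α c s y := by
  rcases hc.eq_or_lt with rfl | hc
  · simp [mirrorKernel]
  · exact mul_nonneg (by linarith) (sub_nonneg.2 (radialPow_le_radialPow hα (by linarith)
      (by nlinarith)))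

lemma norm_mirrorKernel {y : ℝ × ℝ} (hα : -1 ≤ α) (hs : 0 ≤ s) (hy : 0 ≤ y.2) :
    ‖mirrorKernel α c s y‖ =
      |y.1 - c| * (radialPow α (y.1 - c) (y.2 - s) - radialPow α (y.1 - c) (y.2 + s)) := by
  rcases eq_or_ne (y.1 - c) 0 with h0 | h0
  · simp [mirrorKernel, h0]
  · rw [mirrorKernel, norm_mul, Real.norm_eq_abs, Real.norm_of_nonneg
      (sub_nonneg.2 (radialPow_le_radialPow hα h0 (by nlinarith)))]

lemma measurable_mirrorKernel (α c s : ℝ) : Measurable (mirrorKernel α c s) := by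
  unfold mirrorKernel radialPow
  fun_prop

lemma integrable_mirrorKernel_right (hα : -1 / 2 < α) (c s y₁ : ℝ) :
    Integrable fun y₂ => mirrorKernel α c s (y₁, y₂) := by
  rcases eq_or_ne (y₁ - c) 0 with h0 | h0
  · simp [mirrorKernel, h0]
  · have hint := integrable_radialPow hα h0
    simpa only [mirrorKernel, Pi.sub_apply] using
      ((hint.comp_sub_right s).sub (hint.comp_add_right s)).const_mul (y₁ - c)

lemma setIntegral_Ioi_norm_mirrorKernel (hα : -1 / 2 < α) (hs : 0 ≤ s) {y₁ : ℝ} (hc : y₁ ≠ c) :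
    ∫ y₂ in Ioi 0, ‖mirrorKernel α c s (y₁, y₂)‖ =
      |y₁ - c| * ∫ h in -s..s, radialPow α (y₁ - c) h := by
  rw [← setIntegral_Ioi_radialPow_sub hα (sub_ne_zero.2 hc) hs, ← integral_const_mul]
  exact setIntegral_congr_fun measurableSet_Ioi fun y₂ hy₂ =>
    norm_mirrorKernel (y := (y₁, y₂)) (by linarith) hs (le_of_lt hy₂)

lemma setIntegral_Ioi_norm_mirrorKernel_le_pi (hα : 0 ≤ α) (hs : 0 ≤ s) (y₁ : ℝ) :
    ∫ y₂ in Ioi 0, ‖mirrorKernel α c s (y₁, y₂)‖ ≤ Real.pi * |y₁ - c| ^ (-2 * α) := by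
  rcases eq_or_ne y₁ c with rfl | hc
  · simp only [mirrorKernel, sub_self, zero_mul, norm_zero, integral_zero]
    positivity
  · rw [setIntegral_Ioi_norm_mirrorKernel (by linarith) hs hc]
    exact integral_radialPow_le_pi hα (sub_ne_zero.2 hc) hs

lemma setIntegral_Ioi_norm_mirrorKernel_le_rpow (hα : -1 / 2 < α) (hs : 0 ≤ s) (y₁ : ℝ) :
    ∫ y₂ in Ioi 0, ‖mirrorKernel α c s (y₁, y₂)‖ ≤ 2 * s * |y₁ - c| ^ (-1 - 2 * α) := by
  rcases eq_or_ne y₁ c with rfl | hc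
  · simp only [mirrorKernel, sub_self, zero_mul, norm_zero, integral_zero]
    positivity
  · rw [setIntegral_Ioi_norm_mirrorKernel hα hs hc]
    exact integral_radialPow_le_rpow (by linarith) (sub_ne_zero.2 hc) hs

-- The vertical integrals are `O(|y₁ - c| ^ (-2α))`, integrable near `c` since `α < 1/2`, and
-- `O(|y₁ - c| ^ (-1 - 2α))`, integrable at infinity since `0 < α`.
lemma integrableOn_mirrorKernel (hα : 0 < α) (hα' : α < 1 / 2) (c : ℝ) (hs : 0 ≤ s) :
    IntegrableOn (mirrorKernel α c s) (univ ×ˢ Ioi 0) := by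
  have hm := (measurable_mirrorKernel α c s).aestronglyMeasurable
    (μ := (volume : Measure ℝ).prod (volume.restrict (Ioi 0)))
  have hbound := (integrable_comp_abs (integrableOn_Ioi_min_rpow Real.pi_pos.le
    (by positivity : 0 ≤ 2 * s) (by linarith : -1 < -2 * α)
    (by linarith : -1 - 2 * α < -1))).comp_sub_right c
  rw [IntegrableOn, Measure.volume_eq_prod, ← Measure.prod_restrict, Measure.restrict_univ,
    integrable_prod_iff hm]
  refine ⟨.of_forall fun y₁ => (integrable_mirrorKernel_right (by linarith) c s y₁).integrableOn,
    hbound.mono' hm.norm.integral_prod_right' (.of_forall fun y₁ => ?_)⟩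
  rw [Real.norm_of_nonneg (integral_nonneg fun _ => norm_nonneg _)]
  exact le_min (setIntegral_Ioi_norm_mirrorKernel_le_pi hα.le hs y₁)
    (setIntegral_Ioi_norm_mirrorKernel_le_rpow (by linarith) hs y₁)

lemma setIntegral_norm_mirrorKernel_le (hα : 0 < α) (hα' : α < 1 / 2) (hc : 0 ≤ c) (hs : 0 ≤ s) :
    ∫ y in Ioo 0 c ×ˢ Ioi 0, ‖mirrorKernel α c s y‖ ≤
      Real.pi * (c ^ (1 - 2 * α) / (1 - 2 * α)) := by
  have hK : IntegrableOn (fun y => ‖mirrorKernel α c s y‖) (Ioo 0 c ×ˢ Ioi 0) :=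
    ((integrableOn_mirrorKernel hα hα' c hs).mono_set (prod_mono_left (subset_univ _))).norm
  rw [Measure.volume_eq_prod] at hK ⊢
  have hfibre := hK
  rw [IntegrableOn, ← Measure.prod_restrict] at hfibre
  have hpow : IntegrableOn (fun y₁ => Real.pi * (c - y₁) ^ (-2 * α)) (Ioo 0 c) := by
    have h := (intervalIntegral.intervalIntegrable_rpow' (a := c) (b := 0) (r := -2 * α)
      (by linarith)).comp_sub_left c
    rw [sub_self, sub_zero, intervalIntegrable_iff_integrableOn_Ioo_of_le hc] at h
    exact h.const_mul _
  calc ∫ y in Ioo 0 c ×ˢ Ioi 0, ‖mirrorKernel α c s y‖ ∂(volume.prod volume)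
      = ∫ y₁ in Ioo 0 c, ∫ y₂ in Ioi 0, ‖mirrorKernel α c s (y₁, y₂)‖ := setIntegral_prod _ hK
    _ ≤ ∫ y₁ in Ioo 0 c, Real.pi * (c - y₁) ^ (-2 * α) :=
        setIntegral_mono_on hfibre.integral_prod_left hpow measurableSet_Ioo fun y₁ hy₁ => by
          simpa only [abs_sub_comm y₁, abs_of_pos (sub_pos.2 hy₁.2)] using
            setIntegral_Ioi_norm_mirrorKernel_le_pi (c := c) hα.le hs y₁
    _ = Real.pi * ∫ t in (0)..c, t ^ (-2 * α) := by
        rw [integral_const_mul, ← integral_Ioc_eq_integral_Ioo,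
          ← intervalIntegral.integral_of_le hc,
          intervalIntegral.integral_comp_sub_left (fun t => t ^ (-2 * α)), sub_self, sub_zero]
    _ = Real.pi * (c ^ (1 - 2 * α) / (1 - 2 * α)) := by
        rw [integral_rpow (Or.inl (by linarith)), Real.zero_rpow (by linarith)]
        ring_nf

lemma setIntegral_Ioo_mirrorKernel (α s : ℝ) {y₁ : ℝ} (hc : c < y₁) :
    ∫ y₂ in Ioo s (s + (y₁ - c)), mirrorKernel α c s (y₁, y₂) =
      (y₁ - c) * ((∫ h in (0)..(2 * s), radialPow α (y₁ - c) h) -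
        ∫ h in (y₁ - c)..(y₁ - c + 2 * s), radialPow α (y₁ - c) h) := by
  simp only [mirrorKernel]
  set t := y₁ - c
  have ht : 0 < t := sub_pos.2 hc
  have hcont := continuous_radialPow α ht.ne'
  have hint := intervalIntegrable_radialPow α ht.ne'
  rw [← integral_Ioc_eq_integral_Ioo, ← intervalIntegral.integral_of_le (by linarith),
    intervalIntegral.integral_const_mul, intervalIntegral.integral_sub
      ((by fun_prop : Continuous fun y => radialPow α t (y - s)).intervalIntegrable _ _)
      ((by fun_prop : Continuous fun y => radialPow α t (y + s)).intervalIntegrable _ _),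
    intervalIntegral.integral_comp_sub_right, intervalIntegral.integral_comp_add_right,
    intervalIntegral.integral_interval_sub_interval_comm (hint _ _) (hint _ _) (hint _ _)]
  ring_nf

end MirrorKernel

section Triangle

/-- The part of the triangle `A(x)` at horizontal distance more than `b` from its apex `x`. -/
def farTri (x : ℝ × ℝ) (b : ℝ) : Set (ℝ × ℝ) :=
  regionBetween (fun _ => x.2) (fun y₁ => x.2 + (y₁ - x.1)) (Ioo (x.1 + b) (x.1 + 1))

variable {α : ℝ} {x : ℝ × ℝ}

lemma Atri_eq_farTri_zero (x : ℝ × ℝ) : Atri x = farTri x 0 := by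
  ext y
  simp [Atri, farTri, regionBetween, and_assoc]

lemma measurableSet_Atri (x : ℝ × ℝ) : MeasurableSet (Atri x) := by
  rw [Atri_eq_farTri_zero]
  exact measurableSet_regionBetween measurable_const (by fun_prop) measurableSet_Ioo

lemma farTri_subset_Atri (x : ℝ × ℝ) {b : ℝ} (hb : 0 ≤ b) : farTri x b ⊆ Atri x := by
  rw [Atri_eq_farTri_zero]
  exact fun y hy => ⟨⟨by linarith [hy.1.1], hy.1.2⟩, hy.2⟩

lemma Atri_subset_Dplus (hx₁ : 0 ≤ x.1) (hx₂ : 0 ≤ x.2) : Atri x ⊆ Dplus :=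
  fun _ hy => ⟨hx₁.trans_lt hy.1, hx₂.trans_lt hy.2.2.1⟩

lemma Dplus_subset_univ_prod_Ioi : Dplus ⊆ univ ×ˢ Ioi 0 :=
  prod_mono_left (subset_univ _)

lemma integrableOn_mirrorKernel_Atri (hα : 0 < α) (hα' : α < 1 / 2) (hx₂ : 0 ≤ x.2) :
    IntegrableOn (mirrorKernel α x.1 x.2) (Atri x) :=
  (integrableOn_mirrorKernel hα hα' x.1 hx₂).mono_set
    fun _ hy => ⟨mem_univ _, hx₂.trans_lt hy.2.2.1⟩

lemma le_setIntegral_farTri_mirrorKernel (hα : 0 < α) (hα' : α < 1 / 2) (hx₂ : 0 ≤ x.2)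
    {b r : ℝ} (hb : 0 < b) (hb1 : b ≤ 1) (hr : 2 * x.2 ≤ r * b) :
    ((1 + r ^ 2) ^ (-(1 + α)) - 2 ^ (-(1 + α))) * x.2 * ((b ^ (-(2 * α)) - 1) / α) ≤
      ∫ y in farTri x b, mirrorKernel α x.1 x.2 y := by
  set C := (1 + r ^ 2) ^ (-(1 + α)) - 2 ^ (-(1 + α))
  have hr0 : 0 ≤ r := nonneg_of_mul_nonneg_left (hr.trans' (by positivity)) hb
  have hK := (integrableOn_mirrorKernel_Atri hα hα' hx₂).mono_set (farTri_subset_Atri x hb.le)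
  rw [Measure.volume_eq_prod] at hK ⊢
  calc C * x.2 * ((b ^ (-(2 * α)) - 1) / α)
      = ∫ y₁ in Ioo (x.1 + b) (x.1 + 1), 2 * x.2 * (C * (y₁ - x.1) ^ (-1 - 2 * α)) := by
        rw [integral_const_mul, integral_const_mul,
          setIntegral_Ioo_sub_rpow x.1 hb hb1 (by linarith), Real.one_rpow]
        ring_nf
    _ ≤ ∫ y₁ in Ioo (x.1 + b) (x.1 + 1), ∫ y₂ in Ioo x.2 (x.2 + (y₁ - x.1)),
          mirrorKernel α x.1 x.2 (y₁, y₂) := by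
        refine setIntegral_mono_on
          (((integrableOn_Ioo_sub_rpow x.1 hb 1 _).const_mul C).const_mul (2 * x.2))
          (integrableOn_integral_regionBetween measurable_const (by fun_prop) measurableSet_Ioo hK)
          measurableSet_Ioo fun y₁ hy₁ => ?_
        have ht : b ≤ y₁ - x.1 := by linarith [hy₁.1]
        rw [setIntegral_Ioo_mirrorKernel α x.2 (by linarith)]
        exact le_integral_radialPow_sub (by linarith) (by linarith) hx₂ (hr.trans (by gcongr))
    _ = ∫ y in farTri x b, mirrorKernel α x.1 x.2 y ∂(volume.prod volume) :=
        (setIntegral_regionBetween measurable_const (by fun_prop) measurableSet_Ioo hK).symm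

lemma setIntegral_farTri_mirrorKernel_le (hα : 0 < α) (hα' : α < 1 / 2) (hx₂ : 0 ≤ x.2)
    {b : ℝ} (hb : 0 ≤ b) :
    ∫ y in farTri x b, mirrorKernel α x.1 x.2 y ≤ ∫ y in Atri x, mirrorKernel α x.1 x.2 y := by
  refine setIntegral_mono_set (integrableOn_mirrorKernel_Atri hα hα' hx₂)
    ((ae_restrict_mem (measurableSet_Atri x)).mono fun y hy => ?_)
    (farTri_subset_Atri x hb).eventuallyLE
  exact mirrorKernel_nonneg (by linarith) hx₂ hy.1.le (hx₂.trans hy.2.2.1.le)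

end Triangle

section Velocity

variable {α : ℝ} {x : ℝ × ℝ} {ω : ℝ × ℝ → ℝ}

lemma indicator_mirrorKernel_sub_le_K2_mul (hα : -1 ≤ α) (hx₁ : 0 ≤ x.1) (hx₂ : 0 ≤ x.2)
    {y : ℝ × ℝ} (hy : y ∈ Dplus) {w : ℝ} (hw : (Atri x).indicator 1 y ≤ w) (hw1 : w ≤ 1) :
    (Atri x).indicator (mirrorKernel α x.1 x.2) y -
        (Ioo 0 x.1 ×ˢ Ioi 0).indicator (fun y => ‖mirrorKernel α x.1 x.2 y‖) y ≤
      K2 α x y * w := by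
  obtain ⟨hy₁, hy₂⟩ : 0 < y.1 ∧ 0 < y.2 := hy
  have hw0 : 0 ≤ w := (indicator_nonneg (fun _ _ => zero_le_one) y).trans hw
  have hreflected : 0 ≤ mirrorKernel α (-x.1) x.2 y * w :=
    mul_nonneg (mirrorKernel_nonneg hα hx₂ (by linarith) hy₂.le) hw0
  rw [K2_eq_mirrorKernel_add, add_mul]
  refine le_add_of_le_of_nonneg ?_ hreflected
  rcases lt_or_ge y.1 x.1 with hlt | hge
  · have hnorm : ‖mirrorKernel α x.1 x.2 y * w‖ ≤ ‖mirrorKernel α x.1 x.2 y‖ := by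
      rw [norm_mul, Real.norm_of_nonneg hw0]
      exact mul_le_of_le_one_right (norm_nonneg _) hw1
    have hA : y ∉ Atri x := fun h => hlt.not_gt h.1
    have hstrip : y ∈ Ioo 0 x.1 ×ˢ Ioi (0 : ℝ) := ⟨⟨hy₁, hlt⟩, hy₂⟩
    rw [indicator_of_notMem hA, indicator_of_mem hstrip, zero_sub]
    exact neg_le_of_abs_le hnorm
  · have hstrip : y ∉ Ioo 0 x.1 ×ˢ Ioi (0 : ℝ) := fun h => hge.not_gt h.1.2
    rw [indicator_of_notMem hstrip, sub_zero]
    by_cases hA : y ∈ Atri x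
    · rw [indicator_of_mem hA, Pi.one_apply] at hw
      rw [indicator_of_mem hA, le_antisymm hw1 hw, mul_one]
    · rw [indicator_of_notMem hA]
      exact mul_nonneg (mirrorKernel_nonneg hα hx₂ hge hy₂.le) hw0

lemma integrableOn_K2_mul (hα : 0 < α) (hα' : α < 1 / 2) (hx₂ : 0 ≤ x.2) (hm : Measurable ω)
    (hω : ∀ y ∈ Dplus, ‖ω y‖ ≤ 1) : IntegrableOn (fun y => K2 α x y * ω y) Dplus := by
  have hK (c : ℝ) : IntegrableOn (mirrorKernel α c x.2) Dplus :=
    (integrableOn_mirrorKernel hα hα' c hx₂).mono_set Dplus_subset_univ_prod_Ioi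
  simp only [K2_eq_mirrorKernel_add]
  exact ((hK x.1).add (hK (-x.1))).mul_bdd hm.aestronglyMeasurable
    ((ae_restrict_mem (measurableSet_Ioi.prod measurableSet_Ioi)).mono hω)

lemma setIntegral_Atri_sub_le_setIntegral_K2_mul (hα : 0 < α) (hα' : α < 1 / 2) (hx₁ : 0 ≤ x.1)
    (hx₂ : 0 ≤ x.2) (hm : Measurable ω)
    (hω : ∀ y ∈ Dplus, (Atri x).indicator 1 y ≤ ω y ∧ ω y ≤ 1) :
    (∫ y in Atri x, mirrorKernel α x.1 x.2 y) -
        ∫ y in Ioo 0 x.1 ×ˢ Ioi 0, ‖mirrorKernel α x.1 x.2 y‖ ≤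
      ∫ y in Dplus, K2 α x y * ω y := by
  have hD : MeasurableSet Dplus := measurableSet_Ioi.prod measurableSet_Ioi
  have hS : MeasurableSet (Ioo 0 x.1 ×ˢ Ioi (0 : ℝ)) := measurableSet_Ioo.prod measurableSet_Ioi
  have hSD : Ioo 0 x.1 ×ˢ Ioi 0 ⊆ Dplus := prod_mono_left Ioo_subset_Ioi_self
  have hA := measurableSet_Atri x
  have hK := (integrableOn_mirrorKernel hα hα' x.1 hx₂).mono_set Dplus_subset_univ_prod_Ioi
  have hω_norm (y : ℝ × ℝ) (hy : y ∈ Dplus) : ‖ω y‖ ≤ 1 := by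
    rw [Real.norm_of_nonneg ((indicator_nonneg (fun _ _ => zero_le_one) y).trans (hω y hy).1)]
    exact (hω y hy).2
  rw [← inter_eq_right.2 (Atri_subset_Dplus hx₁ hx₂), ← inter_eq_right.2 hSD,
    ← setIntegral_indicator hA, ← setIntegral_indicator hS,
    ← integral_sub (hK.indicator hA) (hK.norm.indicator hS)]
  exact setIntegral_mono_on ((hK.indicator hA).sub (hK.norm.indicator hS))
    (integrableOn_K2_mul hα hα' hx₂ hm hω_norm) hD fun y hy =>
      indicator_mirrorKernel_sub_le_K2_mul (by linarith) hx₁ hx₂ hy (hω y hy).1 (hω y hy).2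

lemma le_setIntegral_K2_mul (hα : 0 < α) (hα' : α < 1 / 2) (hx₁ : 0 ≤ x.1) (hx₂ : 0 ≤ x.2)
    (hm : Measurable ω) (hω : ∀ y ∈ Dplus, (Atri x).indicator 1 y ≤ ω y ∧ ω y ≤ 1)
    {b r : ℝ} (hb : 0 < b) (hb1 : b ≤ 1) (hr : 2 * x.2 ≤ r * b) :
    ((1 + r ^ 2) ^ (-(1 + α)) - 2 ^ (-(1 + α))) * x.2 * ((b ^ (-(2 * α)) - 1) / α) -
        Real.pi * (x.1 ^ (1 - 2 * α) / (1 - 2 * α)) ≤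
      ∫ y in Dplus, K2 α x y * ω y := by
  have htri := (le_setIntegral_farTri_mirrorKernel hα hα' hx₂ hb hb1 hr).trans
    (setIntegral_farTri_mirrorKernel_le hα hα' hx₂ hb.le)
  have hstrip := setIntegral_norm_mirrorKernel_le hα hα' hx₁ hx₂
  have hvel := setIntegral_Atri_sub_le_setIntegral_K2_mul hα hα' hx₁ hx₂ hm hω
  linarith

end Velocity

section Numerics

variable {α a s : ℝ}

lemma le_rpow_five_fourths_sub_rpow_two (hα : 0 < α) (hα' : α ≤ 1 / 24) :
    7 / 25 ≤ (1 + (1 / 2) ^ 2 : ℝ) ^ (-(1 + α)) - 2 ^ (-(1 + α)) := by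
  have htwo : (2 : ℝ) ^ (-(1 + α)) ≤ 2 ^ (-1 : ℝ) :=
    Real.rpow_le_rpow_of_exponent_le one_le_two (by linarith)
  have hfive : 39 / 50 ≤ (1 + (1 / 2) ^ 2 : ℝ) ^ (-(1 + α)) := by
    rw [neg_add, Real.rpow_add (by norm_num), Real.rpow_neg_one]
    have hα_inv : (39 / 40 : ℝ) ≤ (1 + α * (1 / 2) ^ 2)⁻¹ := by
      rw [le_inv_comm₀ (by norm_num) (by positivity)]
      linarith
    linarith [inv_one_add_mul_le_rpow_neg (s := (1 / 2) ^ 2) (by norm_num) hα.le (by linarith)]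
  rw [Real.rpow_neg_one] at htwo
  linarith

lemma le_mul_rpow_four_mul_sub_one (hα : 0 < α) (hα' : α ≤ 1 / 24) (hs : 0 < s)
    (hsα : s ^ (2 * α) ≤ 1 / 100) :
    79 / 100 * s ^ (1 - 2 * α) ≤ s * ((4 * s) ^ (-(2 * α)) - 1) := by
  have hfour : 4 / 5 ≤ (4 : ℝ) ^ (-(2 * α)) := by
    calc (4 / 5 : ℝ) ≤ (1 + 2 * α * 3)⁻¹ := by
          rw [le_inv_comm₀ (by norm_num) (by positivity)]
          linarith
      _ ≤ (1 + 3) ^ (-(2 * α)) :=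
          inv_one_add_mul_le_rpow_neg (by norm_num) (by linarith) (by linarith)
      _ = 4 ^ (-(2 * α)) := by norm_num
  have hsmall : s ≤ s ^ (1 - 2 * α) * (1 / 100) := by
    calc s = s ^ (1 - 2 * α) * s ^ (2 * α) := by
          rw [← Real.rpow_add hs, sub_add_cancel, Real.rpow_one]
      _ ≤ s ^ (1 - 2 * α) * (1 / 100) := by gcongr
  calc 79 / 100 * s ^ (1 - 2 * α) ≤ 4 / 5 * s ^ (1 - 2 * α) - s := by linarith
    _ ≤ 4 ^ (-(2 * α)) * s ^ (1 - 2 * α) - s := by gcongr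
    _ = s * ((4 * s) ^ (-(2 * α)) - 1) := by
        rw [Real.mul_rpow (by norm_num) hs.le, sub_eq_add_neg 1, Real.rpow_one_add' hs.le
          (by linarith)]
        ring

lemma pi_mul_rpow_div_le (hα' : α ≤ 1 / 24) (ha : 0 ≤ a) (has : a ≤ s) :
    Real.pi * (a ^ (1 - 2 * α) / (1 - 2 * α)) ≤ 4 * s ^ (1 - 2 * α) := by
  calc Real.pi * (a ^ (1 - 2 * α) / (1 - 2 * α))
      ≤ 3.15 * (s ^ (1 - 2 * α) / (11 / 12)) := by
        have hnonneg : 0 ≤ a ^ (1 - 2 * α) / (1 - 2 * α) :=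
          div_nonneg (by positivity) (by linarith)
        have hs : 0 ≤ s ^ (1 - 2 * α) := Real.rpow_nonneg (ha.trans has) _
        gcongr
        all_goals linarith [Real.pi_lt_d2]
    _ ≤ 4 * s ^ (1 - 2 * α) := by
        linarith [Real.rpow_nonneg (ha.trans has) (1 - 2 * α)]

lemma one_div_mul_rpow_le_triangle_sub_strip (hα : 0 < α) (hα' : α ≤ 1 / 24) (ha : 0 ≤ a)
    (has : a ≤ s) (hs : 0 < s) (hsα : s ^ (2 * α) ≤ 1 / 100) :
    1 / (50 * α) * s ^ (1 - 2 * α) ≤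
      ((1 + (1 / 2) ^ 2) ^ (-(1 + α)) - 2 ^ (-(1 + α))) * s * (((4 * s) ^ (-(2 * α)) - 1) / α) -
        Real.pi * (a ^ (1 - 2 * α) / (1 - 2 * α)) := by
  have hcoeff := le_rpow_five_fourths_sub_rpow_two hα hα'
  have hmain := le_mul_rpow_four_mul_sub_one hα hα' hs hsα
  have hneg := pi_mul_rpow_div_le hα' ha has
  set P := s ^ (1 - 2 * α)
  have hP : 0 < P := by positivity
  have hfour : 4 * P ≤ 1 / 6 * P / α := by
    rw [le_div_iff₀ hα]
    nlinarith
  calc 1 / (50 * α) * P = 1 / 50 * P / α := by field_simp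
    _ ≤ 7 / 25 * (79 / 100 * P) / α - 1 / 6 * P / α := by
        rw [← sub_div]
        gcongr
        linarith
    _ ≤ ((1 + (1 / 2) ^ 2) ^ (-(1 + α)) - 2 ^ (-(1 + α))) *
          (s * ((4 * s) ^ (-(2 * α)) - 1)) / α - 4 * P := by
        gcongr
    _ ≤ _ := by
        rw [mul_assoc, mul_div_assoc, mul_div_assoc]
        gcongr

end Numerics

/-- For `α ∈ (0,1/24)` there is `δ ∈ (0,1)`, depending only on `α`, such that
for every `x` in the closure of `D⁺` with `x₁ ≤ x₂ ≤ δ` and every measurable `ω`, odd in `x₁`,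
with `χ_{A(x)} ≤ ω ≤ 1` on `D⁺`:
`u₂(x) = ∫_{D⁺} K2(x,y) ω(y) dy ≥ (1/(50α))·x₂^{1-2α}`. -/
theorem stmt8 (α : ℝ) (hα : α ∈ Set.Ioo (0 : ℝ) (1/24)) :
    ∃ δ ∈ Set.Ioo (0 : ℝ) 1,
      ∀ x : ℝ × ℝ, x ∈ closure Dplus → x.1 ≤ x.2 → x.2 ≤ δ →
      ∀ ω : ℝ × ℝ → ℝ, Measurable ω →
        (∀ y : ℝ × ℝ, 0 < y.2 → ω (-y.1, y.2) = -ω (y.1, y.2)) →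
        (∀ y ∈ Dplus, (Atri x).indicator (fun _ => (1 : ℝ)) y ≤ ω y ∧ ω y ≤ 1) →
        ∫ y in Dplus, K2 α x y * ω y ≥ 1 / (50 * α) * x.2 ^ (1 - 2 * α) := by
  obtain ⟨hα0, hα1⟩ := hα
  have hδ : ((1 / 100 : ℝ) ^ (1 / (2 * α))) ^ (2 * α) = 1 / 100 := by
    rw [← Real.rpow_mul (by norm_num), one_div_mul_cancel (by positivity), Real.rpow_one]
  have hδ_le : (1 / 100 : ℝ) ^ (1 / (2 * α)) ≤ 1 / 100 :=
    Real.rpow_le_self_of_le_one (by norm_num) (by norm_num)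
      ((le_div_iff₀ (by positivity)).2 (by linarith))
  refine ⟨(1 / 100) ^ (1 / (2 * α)), ⟨by positivity, by linarith⟩, ?_⟩
  intro x hx hx12 hxδ ω hm _ hω
  rw [Dplus, closure_prod_eq, closure_Ioi] at hx
  obtain ⟨hx₁, hx₂⟩ : 0 ≤ x.1 ∧ 0 ≤ x.2 := hx
  rcases hx₂.eq_or_lt with h0 | hpos
  · have hK (y : ℝ × ℝ) : K2 α x y = 0 := by simp [K2_eq_mirrorKernel_add, mirrorKernel, ← h0]
    simp [hK, ← h0, Real.zero_rpow (by linarith : 1 - 2 * α ≠ 0)]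
  · have hxα : x.2 ^ (2 * α) ≤ 1 / 100 := hδ ▸ Real.rpow_le_rpow hx₂ hxδ (by positivity)
    exact (one_div_mul_rpow_le_triangle_sub_strip hα0 hα1.le hx₁ hx12 hpos hxα).trans
      (le_setIntegral_K2_mul hα0 (by linarith) hx₁ hx₂ hm hω (by positivity) (by linarith)
        (by linarith))
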